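/- arXiv:1503.01748 — 2 statements merged into one kernel-verified Lean document; each statement's English description precedes it below -/
import Mathlib

section
/- Asymptotics of the fundamental solutions (Lemma on X₁, X₂): There exists a constant C > 0 such that for all λ ∈ ℂ with |λ| ≥ 1 and all x ∈ [0,T]: ‖X₁(x,λ) − (cos(λx), sin(λx))ᵀ‖ ≤ (C/|λ|) e^{|Im λ| x} and ‖X₂(x,λ) − (−sin(λx), cos(λx))ᵀ‖ ≤ (C/|λ|) e^{|Im λ| x}. -/
open MeasureTheory Set Filter

noncomputable section

/-- A function `f : ℝ → ℂ` is absolutely continuous on `[0, T]`: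
it is the indefinite integral of an integrable function. -/
def AbsContOn (f : ℝ → ℂ) (T : ℝ) : Prop :=
  ∃ g : ℝ → ℂ, IntervalIntegrable g volume 0 T ∧
    ∀ x ∈ Icc (0 : ℝ) T, f x = f 0 + ∫ t in (0 : ℝ)..x, g t

/-- `y : ℝ → ℂ × ℂ` is a solution of the Dirac system `B y' + Ω y = λ y` on `[0, T]`,
where `B = ![![0,1],![-1,0]]` and `Ω = ![![p,q],![q,-p]]`:  `y` is continuous on `[0,T]`
and satisfies the equivalent system of integral equations coming from
`y₁' = q y₁ - (p + λ) y₂`, `y₂' = (λ - p) y₁ - q y₂`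
(this encodes: `y` is absolutely continuous and the ODE holds a.e.). -/
def IsDiracSol (p q : ℝ → ℂ) (T : ℝ) (lam : ℂ) (y : ℝ → ℂ × ℂ) : Prop :=
  ContinuousOn y (Icc (0 : ℝ) T) ∧
    ∀ x ∈ Icc (0 : ℝ) T,
      ((y x).1 = (y 0).1 + ∫ t in (0 : ℝ)..x, (q t * (y t).1 - (p t + lam) * (y t).2)) ∧
      ((y x).2 = (y 0).2 + ∫ t in (0 : ℝ)..x, ((lam - p t) * (y t).1 - q t * (y t).2))

/-- A nonlocal linear form `U(y) = ∫_{[0,T]} y₁ dμ₁ + ∫_{[0,T]} y₂ dμ₂`, where the complex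
Borel measures `μᵢ` are encoded (via Radon–Nikodym) as integrable complex densities `wᵢ`
with respect to finite positive measures. -/
structure NonlocalForm (T : ℝ) where
  μ₁ : Measure ℝ
  μ₂ : Measure ℝ
  finite₁ : IsFiniteMeasure μ₁
  finite₂ : IsFiniteMeasure μ₂
  w₁ : ℝ → ℂ
  w₂ : ℝ → ℂ
  int₁ : Integrable w₁ μ₁
  int₂ : Integrable w₂ μ₂

namespace NonlocalForm

variable {T : ℝ}

/-- The value `U(y)` of the nonlocal form on a function `y`. -/
def app (U : NonlocalForm T) (y : ℝ → ℂ × ℂ) : ℂ :=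
  (∫ t in Icc (0 : ℝ) T, U.w₁ t * (y t).1 ∂U.μ₁) +
    ∫ t in Icc (0 : ℝ) T, U.w₂ t * (y t).2 ∂U.μ₂

/-- `h₁ = μ₁({0})`, the mass of the first complex measure at `0`. -/
def h₁ (U : NonlocalForm T) : ℂ := U.w₁ 0 * ((U.μ₁ {0}).toReal : ℂ)

/-- `h₂ = μ₂({0})`, the mass of the second complex measure at `0`. -/
def h₂ (U : NonlocalForm T) : ℂ := U.w₂ 0 * ((U.μ₂ {0}).toReal : ℂ)

end NonlocalForm

/-- A two-point (local) linear form `y ↦ c₁ y₁(t) + c₂ y₂(t)`. -/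
def locForm (c₁ c₂ : ℂ) (t : ℝ) (y : ℝ → ℂ × ℂ) : ℂ := c₁ * (y t).1 + c₂ * (y t).2

/-- `f` and `g` have the same order of zero at `z` (order possibly `0` or `∞`):
for every `n`, the first `n` derivatives of `f` vanish at `z` iff
the first `n` derivatives of `g` do. -/
def ZeroOrderEq (f g : ℂ → ℂ) (z : ℂ) : Prop :=
  ∀ n : ℕ, (∀ k < n, iteratedDeriv k f z = 0) ↔ (∀ k < n, iteratedDeriv k g z = 0)

/-- The filter of `λ → ∞` within the sector `arg λ ∈ [δ, π - δ]`. -/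
def sectorFilter (δ : ℝ) : Filter ℂ :=
  Filter.comap (fun lam : ℂ => ‖lam‖) Filter.atTop ⊓
    Filter.principal {lam : ℂ | Complex.arg lam ∈ Icc δ (Real.pi - δ)}

/-!
For `c = ±i` the combination `y₁ + c y₂` of a solution diagonalises the leading part of the Dirac
system: `u = y₁ + c y₂`, `v = y₁ - c y₂` satisfy `u' = κ u + a v`, `v' = -κ v + b u` with `κ = c λ`,
`a = q - c p`, `b = q + c p`. Grönwall's inequality bounds `u` and `v` by a multiple of
`e^{|Re κ| x}`, but Duhamel's formula for `u` gives no decay in `κ`. The decay comes from the next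
term of the diagonalisation: `s = 2 κ u + a v` satisfies `s' = κ s + (a' v + a b u)`, where the
forcing no longer grows with `κ`. Hence `2 κ (u - e^{κ x} u(0))` is itself of order
`e^{|Re κ| x}`. Taking `c = i` and `c = -i` recovers both components of `y`.
-/

section Primitive

variable {E : Type*} [NormedAddCommGroup E] [NormedSpace ℝ E] {f f' g g' : ℝ → E} {a b c : ℝ}

/-- `f` is an indefinite integral of `f'` on the interval between `a` and `b`. For such `f` and
`f'` this is "`f` is absolutely continuous with derivative `f'` almost everywhere", stated so that
systems with merely integrable coefficients are as easy to handle as classical ones. -/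
structure IsPrimitiveOn (f f' : ℝ → E) (a b : ℝ) : Prop where
  intervalIntegrable : IntervalIntegrable f' volume a b
  eq_add_integral : ∀ x ∈ uIcc a b, f x = f a + ∫ t in a..x, f' t

theorem absolutelyContinuousOnInterval_of_dist_le {X Y : Type*} [PseudoMetricSpace X]
    [PseudoMetricSpace Y] {F : ℝ → X} {G : ℝ → Y} (hF : AbsolutelyContinuousOnInterval F a b)
    (h : ∀ x ∈ uIcc a b, ∀ y ∈ uIcc a b, dist (G x) (G y) ≤ dist (F x) (F y)) :
    AbsolutelyContinuousOnInterval G a b := by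
  refine squeeze_zero' (.of_forall fun _ => Finset.sum_nonneg fun _ _ => dist_nonneg) ?_ hF
  filter_upwards [mem_inf_of_right (mem_principal_self _)] with I hI
  exact Finset.sum_le_sum fun i hi => h _ (hI.1 i hi).1 _ (hI.1 i hi).2

namespace IsPrimitiveOn

theorem mono (hf : IsPrimitiveOn f f' a b) (hc : c ∈ uIcc a b) : IsPrimitiveOn f f' a c :=
  have hsub : uIcc a c ⊆ uIcc a b := uIcc_subset_uIcc_left hc
  ⟨hf.intervalIntegrable.mono_set hsub, fun x hx => hf.eq_add_integral x (hsub hx)⟩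

theorem integral_eq_sub (hf : IsPrimitiveOn f f' a b) : ∫ t in a..b, f' t = f b - f a :=
  eq_sub_of_add_eq' (hf.eq_add_integral b right_mem_uIcc).symm

theorem congr_deriv (hf : IsPrimitiveOn f f' a b) (h : EqOn f' g' (uIcc a b)) :
    IsPrimitiveOn f g' a b where
  intervalIntegrable := hf.intervalIntegrable.congr (h.mono uIoc_subset_uIcc)
  eq_add_integral x hx := by
    rw [hf.eq_add_integral x hx,
      intervalIntegral.integral_congr (h.mono (uIcc_subset_uIcc_left hx))]

theorem continuousOn (hf : IsPrimitiveOn f f' a b) : ContinuousOn f (uIcc a b) :=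
  (continuousOn_const.add (intervalIntegral.continuousOn_primitive_interval'
    hf.intervalIntegrable left_mem_uIcc)).congr hf.eq_add_integral

theorem add (hf : IsPrimitiveOn f f' a b) (hg : IsPrimitiveOn g g' a b) :
    IsPrimitiveOn (fun t => f t + g t) (fun t => f' t + g' t) a b where
  intervalIntegrable := hf.intervalIntegrable.add hg.intervalIntegrable
  eq_add_integral x hx := by
    rw [hf.eq_add_integral x hx, hg.eq_add_integral x hx, intervalIntegral.integral_add
      (hf.mono hx).intervalIntegrable (hg.mono hx).intervalIntegrable, add_add_add_comm]

theorem absolutelyContinuousOnInterval (hf : IsPrimitiveOn f f' a b) :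
    AbsolutelyContinuousOnInterval f a b := by
  refine absolutelyContinuousOnInterval_of_dist_le
    (hf.intervalIntegrable.norm.absolutelyContinuousOnInterval_intervalIntegral left_mem_uIcc)
    fun x hx y hy => ?_
  have hx' := (hf.mono hx).intervalIntegrable
  have hy' := (hf.mono hy).intervalIntegrable
  rw [hf.eq_add_integral x hx, hf.eq_add_integral y hy, dist_add_left, dist_eq_norm, Real.dist_eq,
    intervalIntegral.integral_interval_sub_left hx' hy',
    intervalIntegral.integral_interval_sub_left hx'.norm hy'.norm]
  exact intervalIntegral.norm_integral_le_abs_integral_norm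

variable [CompleteSpace E]

theorem of_hasDerivAt (hf : ∀ x ∈ uIcc a b, HasDerivAt f (f' x) x)
    (hf' : IntervalIntegrable f' volume a b) : IsPrimitiveOn f f' a b where
  intervalIntegrable := hf'
  eq_add_integral x hx := by
    have hsub : uIcc a x ⊆ uIcc a b := uIcc_subset_uIcc_left hx
    rw [intervalIntegral.integral_eq_sub_of_hasDerivAt (fun t ht => hf t (hsub ht))
      (hf'.mono_set hsub), add_sub_cancel]

theorem ae_hasDerivAt (hf : IsPrimitiveOn f f' a b) :
    ∀ᵐ x, x ∈ uIcc a b → HasDerivAt f (f' x) x := by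
  filter_upwards [hf.intervalIntegrable.ae_hasDerivAt_integral, Measure.ae_ne volume a,
    Measure.ae_ne volume b] with x hx hxa hxb hxab
  have hnhds : uIcc a b ∈ nhds x := Icc_mem_nhds (by grind [uIcc]) (by grind [uIcc])
  exact ((hx hxab a left_mem_uIcc).const_add (f a)).congr_of_eventuallyEq
    (mem_of_superset hnhds hf.eq_add_integral)

theorem of_ae_hasDerivAt (hf : AbsolutelyContinuousOnInterval f a b)
    (hf' : IntervalIntegrable f' volume a b)
    (hderiv : ∀ᵐ x, x ∈ uIcc a b → HasDerivAt f (f' x) x) : IsPrimitiveOn f f' a b where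
  intervalIntegrable := hf'
  eq_add_integral := by
    have hF : IsPrimitiveOn (fun x => ∫ t in a..x, f' t) f' a b := ⟨hf', by simp⟩
    obtain ⟨C, hC⟩ :=
      (hf.sub hF.absolutelyContinuousOnInterval).const_of_ae_hasDerivAt_zero <| by
        filter_upwards [hderiv, hF.ae_hasDerivAt] with x hfx hFx hx
        simpa only [sub_self] using (hfx hx).sub (hFx hx)
    have hCa : f a = C := by simpa using hC a left_mem_uIcc
    intro x hx
    rw [hCa, ← hC x hx, Pi.sub_apply, sub_add_cancel]

theorem mul {A : Type*} [NormedDivisionRing A] [NormedAlgebra ℝ A] [CompleteSpace A]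
    {f f' g g' : ℝ → A} (hf : IsPrimitiveOn f f' a b) (hg : IsPrimitiveOn g g' a b) :
    IsPrimitiveOn (fun t => f t * g t) (fun t => f' t * g t + f t * g' t) a b := by
  refine .of_ae_hasDerivAt
    (hf.absolutelyContinuousOnInterval.smul hg.absolutelyContinuousOnInterval)
    ((hf.intervalIntegrable.mul_continuousOn hg.continuousOn).add
      (hg.intervalIntegrable.continuousOn_mul hf.continuousOn)) ?_
  filter_upwards [hf.ae_hasDerivAt, hg.ae_hasDerivAt] with x hfx hgx hx
  exact (hfx hx).mul (hgx hx)

theorem const_mul {A : Type*} [NormedDivisionRing A] [NormedAlgebra ℝ A]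
    {f f' : ℝ → A} (hf : IsPrimitiveOn f f' a b) (k : A) :
    IsPrimitiveOn (fun t => k * f t) (fun t => k * f' t) a b where
  intervalIntegrable := hf.intervalIntegrable.const_mul k
  eq_add_integral x hx := by
    rw [hf.eq_add_integral x hx, mul_add, intervalIntegral.integral_const_mul]

end IsPrimitiveOn

end Primitive

section Duhamel

variable {κ : ℂ} {a x : ℝ}

theorem IsPrimitiveOn.eq_exp_mul_add_integral {u f : ℝ → ℂ}
    (hu : IsPrimitiveOn u (fun t => κ * u t + f t) a x) :
    u x = Complex.exp (κ * (x - a)) * u a + ∫ t in a..x, Complex.exp (κ * (x - t)) * f t := by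
  have hexp : IsPrimitiveOn (fun t : ℝ => Complex.exp (κ * (x - t)))
      (fun t : ℝ => Complex.exp (κ * (x - t)) * -κ) a x := by
    refine .of_hasDerivAt (fun t _ => ?_) (Continuous.intervalIntegrable (by fun_prop) _ _)
    simpa using ((Complex.ofRealCLM.hasDerivAt.const_sub (x : ℂ)).const_mul κ).cexp
  have hprod := (hexp.mul hu).congr_deriv (g' := fun t => Complex.exp (κ * (x - t)) * f t)
    fun t _ => by ring
  simpa using eq_add_of_sub_eq' hprod.integral_eq_sub.symm

theorem norm_exp_mul_le_exp_abs_re_mul (κ : ℂ) {s : ℝ} (hs : 0 ≤ s) :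
    ‖Complex.exp (κ * s)‖ ≤ Real.exp (|κ.re| * s) := by
  rw [Complex.norm_exp, Complex.re_mul_ofReal]
  gcongr
  exact le_abs_self _

theorem norm_integral_exp_mul_le {f : ℝ → ℂ} {φ : ℝ → ℝ} (hax : a ≤ x)
    (hφ : IntervalIntegrable φ volume a x)
    (hf : ∀ t ∈ Ioc a x, ‖f t‖ ≤ φ t * Real.exp (|κ.re| * t)) :
    ‖∫ t in a..x, Complex.exp (κ * (x - t)) * f t‖ ≤
      Real.exp (|κ.re| * x) * ∫ t in a..x, φ t := by
  rw [← intervalIntegral.integral_const_mul]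
  refine intervalIntegral.norm_integral_le_of_norm_le hax (.of_forall fun t ht => ?_)
    (hφ.const_mul _)
  calc ‖Complex.exp (κ * (x - t)) * f t‖
      ≤ Real.exp (|κ.re| * (x - t)) * (φ t * Real.exp (|κ.re| * t)) := by
        rw [norm_mul, ← Complex.ofReal_sub]
        gcongr
        · exact norm_exp_mul_le_exp_abs_re_mul κ (sub_nonneg.2 ht.2)
        · exact hf t ht
    _ = Real.exp (|κ.re| * x) * φ t := by
        rw [mul_left_comm, ← Real.exp_add, ← mul_add, sub_add_cancel, mul_comm]

end Duhamel

theorem le_mul_exp_of_le_add_mul_integral {m : ℝ → ℝ} {δ K a b : ℝ} (hK : 0 ≤ K)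
    (hm : ContinuousOn m (Icc a b))
    (hle : ∀ x ∈ Icc a b, m x ≤ δ + K * ∫ t in a..x, m t) :
    ∀ x ∈ Icc a b, m x ≤ δ * Real.exp (K * (x - a)) := by
  set F : ℝ → ℝ := fun x => δ + K * ∫ t in a..x, m t with hF
  have hderiv : ∀ x ∈ Icc a b, HasDerivWithinAt F (K * m x) (Icc a b) x := fun x hx => by
    have := Fact.mk hx
    have hint : IntervalIntegrable m volume a x :=
      (hm.mono (Icc_subset_Icc_right hx.2)).intervalIntegrable_of_Icc hx.1
    exact ((intervalIntegral.integral_hasDerivWithinAt_right hint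
      (hm.stronglyMeasurableAtFilter_nhdsWithin measurableSet_Icc x) (hm x hx)).const_mul
        K).const_add δ
  have hgronwall := le_gronwallBound_of_liminf_deriv_right_le (f := F) (f' := fun x => K * m x)
    (δ := δ) (K := K) (ε := 0) (a := a) (b := b)
    (fun x hx => (hderiv x hx).continuousWithinAt)
    (fun x hx r hr => ((hderiv x (Ico_subset_Icc_self hx)).mono_of_mem_nhdsWithin
      (Icc_mem_nhdsGE_of_mem hx)).liminf_right_slope_le hr) (by simp [hF])
    (fun x hx => by
      simpa using mul_le_mul_of_nonneg_left (hle x (Ico_subset_Icc_self hx)) hK)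
  intro x hx
  simpa only [gronwallBound_ε0] using (hle x hx).trans (hgronwall x hx)

/-- The first order system `u' = κ u + a v`, `v' = -κ v + b u` on `[0, T]` with constant opposite
diagonal entries, to which the Dirac system reduces in the eigenbasis of its leading part. -/
structure IsSplitSol (κ : ℂ) (a b u v : ℝ → ℂ) (T : ℝ) : Prop where
  left : IsPrimitiveOn u (fun t => κ * u t + a t * v t) 0 T
  right : IsPrimitiveOn v (fun t => -κ * v t + b t * u t) 0 T

namespace IsSplitSol

variable {κ : ℂ} {a a' b u v : ℝ → ℂ} {T x M : ℝ}

theorem symm (h : IsSplitSol κ a b u v T) : IsSplitSol (-κ) b a v u T :=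
  ⟨h.right, by simpa only [neg_neg] using h.left⟩

theorem mono (h : IsSplitSol κ a b u v T) (hx : x ∈ uIcc 0 T) : IsSplitSol κ a b u v x :=
  ⟨h.left.mono hx, h.right.mono hx⟩

theorem intervalIntegrable_exp_mul_norm (h : IsSplitSol κ a b u v T) (r : ℝ) :
    IntervalIntegrable (fun t => Real.exp (-(r * t)) * ‖v t‖) volume 0 T :=
  (ContinuousOn.mul (by fun_prop) h.right.continuousOn.norm).intervalIntegrable

theorem norm_left_le (h : IsSplitSol κ a b u v T) (hT : 0 ≤ T) (ha : ∀ t ∈ Icc 0 T, ‖a t‖ ≤ M) :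
    Real.exp (-(|κ.re| * T)) * ‖u T‖ ≤
      ‖u 0‖ + M * ∫ t in 0..T, Real.exp (-(|κ.re| * t)) * ‖v t‖ := by
  have hforcing : ∀ t ∈ Ioc 0 T, ‖a t * v t‖ ≤
      M * (Real.exp (-(|κ.re| * t)) * ‖v t‖) * Real.exp (|κ.re| * t) := fun t ht => by
    rw [norm_mul, mul_assoc, mul_right_comm, ← Real.exp_add, neg_add_cancel, Real.exp_zero,
      one_mul]
    gcongr
    exact ha t (Ioc_subset_Icc_self ht)
  rw [Real.exp_neg, inv_mul_le_iff₀ (Real.exp_pos _), mul_add,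
    ← intervalIntegral.integral_const_mul, h.left.eq_exp_mul_add_integral, ← Complex.ofReal_sub]
  refine (norm_add_le _ _).trans (add_le_add ?_ ?_)
  · rw [norm_mul]
    gcongr
    simpa using norm_exp_mul_le_exp_abs_re_mul κ hT
  · exact norm_integral_exp_mul_le hT ((h.intervalIntegrable_exp_mul_norm _).const_mul M) hforcing

theorem norm_add_norm_le (h : IsSplitSol κ a b u v T) (ha : ∀ t ∈ Icc 0 T, ‖a t‖ ≤ M)
    (hb : ∀ t ∈ Icc 0 T, ‖b t‖ ≤ M) (hx : x ∈ Icc 0 T) :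
    ‖u x‖ + ‖v x‖ ≤ (‖u 0‖ + ‖v 0‖) * Real.exp (M * x) * Real.exp (|κ.re| * x) := by
  have hT : (0 : ℝ) ≤ T := hx.1.trans hx.2
  have hM : 0 ≤ M := (norm_nonneg _).trans (ha x hx)
  have hcont := h.left.continuousOn.norm.add h.right.continuousOn.norm
  rw [uIcc_of_le hT] at hcont
  have hgronwall := le_mul_exp_of_le_add_mul_integral (a := 0) (b := T)
    (m := fun t => Real.exp (-(|κ.re| * t)) * (‖u t‖ + ‖v t‖)) (δ := ‖u 0‖ + ‖v 0‖) hM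
    (ContinuousOn.mul (by fun_prop) hcont) (fun t ht => ?_) x hx
  · rwa [sub_zero, Real.exp_neg, inv_mul_le_iff₀' (Real.exp_pos _)] at hgronwall
  have ht' := h.mono (Icc_subset_uIcc ht)
  have hu := ht'.norm_left_le ht.1 fun s hs => ha s (Icc_subset_Icc_right ht.2 hs)
  have hv := ht'.symm.norm_left_le ht.1 fun s hs => hb s (Icc_subset_Icc_right ht.2 hs)
  have hu' := ht'.symm.intervalIntegrable_exp_mul_norm |κ.re|
  have hv' := ht'.intervalIntegrable_exp_mul_norm |κ.re|
  rw [Complex.neg_re, abs_neg] at hv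
  simp only [mul_add, intervalIntegral.integral_add hu' hv']
  linarith

theorem isPrimitiveOn_diagonalized (h : IsSplitSol κ a b u v T) (ha : IsPrimitiveOn a a' 0 T) :
    IsPrimitiveOn (fun t => 2 * κ * u t + a t * v t)
      (fun t => κ * (2 * κ * u t + a t * v t) + (a' t * v t + a t * b t * u t)) 0 T :=
  ((h.left.const_mul (2 * κ)).add (ha.mul h.right)).congr_deriv fun t _ => by ring

theorem two_mul_mul_sub_exp_mul (h : IsSplitSol κ a b u v T) (ha : IsPrimitiveOn a a' 0 T) :
    2 * κ * (u T - Complex.exp (κ * T) * u 0) =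
      Complex.exp (κ * T) * (a 0 * v 0) - a T * v T +
        ∫ t in 0..T, Complex.exp (κ * (T - t)) * (a' t * v t + a t * b t * u t) := by
  have hduhamel := (h.isPrimitiveOn_diagonalized ha).eq_exp_mul_add_integral
  simp only [Complex.ofReal_zero, sub_zero] at hduhamel
  linear_combination hduhamel

theorem norm_mul_norm_sub_exp_mul_le_of_norm_le {G : ℝ} (h : IsSplitSol κ a b u v T)
    (hT : 0 ≤ T) (haa' : IsPrimitiveOn a a' 0 T) (ha : ∀ t ∈ Icc 0 T, ‖a t‖ ≤ M)
    (hb : ∀ t ∈ Icc 0 T, ‖b t‖ ≤ M) (hu : ∀ t ∈ Icc 0 T, ‖u t‖ ≤ G * Real.exp (|κ.re| * t))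
    (hv : ∀ t ∈ Icc 0 T, ‖v t‖ ≤ G * Real.exp (|κ.re| * t)) :
    2 * ‖κ‖ * ‖u T - Complex.exp (κ * T) * u 0‖ ≤
      (2 * M + ∫ t in 0..T, (‖a' t‖ + M ^ 2)) * G * Real.exp (|κ.re| * T) := by
  have h0 : (0 : ℝ) ∈ Icc 0 T := left_mem_Icc.2 hT
  have hTT : T ∈ Icc 0 T := right_mem_Icc.2 hT
  have hM : 0 ≤ M := (norm_nonneg _).trans (ha 0 h0)
  have hinitial : ‖Complex.exp (κ * T) * (a 0 * v 0)‖ ≤ Real.exp (|κ.re| * T) * (M * G) := by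
    rw [norm_mul, norm_mul]
    gcongr
    · exact norm_exp_mul_le_exp_abs_re_mul κ hT
    · exact ha 0 h0
    · simpa using hv 0 h0
  have hterminal : ‖a T * v T‖ ≤ M * (G * Real.exp (|κ.re| * T)) := by
    rw [norm_mul]
    exact mul_le_mul (ha T hTT) (hv T hTT) (norm_nonneg _) hM
  have hforcing : ∀ t ∈ Ioc 0 T, ‖a' t * v t + a t * b t * u t‖ ≤
      (‖a' t‖ + M ^ 2) * G * Real.exp (|κ.re| * t) := fun t ht => by
    replace ht := Ioc_subset_Icc_self ht
    calc ‖a' t * v t + a t * b t * u t‖ ≤ ‖a' t‖ * ‖v t‖ + ‖a t‖ * ‖b t‖ * ‖u t‖ :=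
          (norm_add_le _ _).trans_eq (by simp only [norm_mul])
      _ ≤ ‖a' t‖ * (G * Real.exp (|κ.re| * t)) + M * M * (G * Real.exp (|κ.re| * t)) := by
          gcongr
          exacts [hv t ht, ha t ht, hb t ht, hu t ht]
      _ = (‖a' t‖ + M ^ 2) * G * Real.exp (|κ.re| * t) := by ring
  have hintegral := norm_integral_exp_mul_le hT
    ((haa'.intervalIntegrable.norm.add intervalIntegrable_const).mul_const G) hforcing
  rw [intervalIntegral.integral_mul_const] at hintegral
  have hnorm : ‖2 * κ * (u T - Complex.exp (κ * T) * u 0)‖ =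
      2 * ‖κ‖ * ‖u T - Complex.exp (κ * T) * u 0‖ := by
    simp only [norm_mul, Complex.norm_ofNat]
  rw [← hnorm, h.two_mul_mul_sub_exp_mul haa']
  linarith [norm_add_le_of_le ((norm_sub_le _ _).trans (add_le_add hinitial hterminal)) hintegral]

theorem norm_mul_norm_sub_exp_mul_le (h : IsSplitSol κ a b u v T) (hT : 0 ≤ T)
    (haa' : IsPrimitiveOn a a' 0 T) (ha : ∀ t ∈ Icc 0 T, ‖a t‖ ≤ M)
    (hb : ∀ t ∈ Icc 0 T, ‖b t‖ ≤ M) :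
    2 * ‖κ‖ * ‖u T - Complex.exp (κ * T) * u 0‖ ≤
      (2 * M + ∫ t in 0..T, (‖a' t‖ + M ^ 2)) * ((‖u 0‖ + ‖v 0‖) * Real.exp (M * T)) *
        Real.exp (|κ.re| * T) := by
  have hM : 0 ≤ M := (norm_nonneg _).trans (ha 0 (left_mem_Icc.2 hT))
  have hsum : ∀ t ∈ Icc 0 T, ‖u t‖ + ‖v t‖ ≤
      (‖u 0‖ + ‖v 0‖) * Real.exp (M * T) * Real.exp (|κ.re| * t) := fun t ht =>
    (h.norm_add_norm_le ha hb ht).trans (by gcongr; exact ht.2)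
  exact h.norm_mul_norm_sub_exp_mul_le_of_norm_le hT haa' ha hb
    (fun t ht => (le_add_of_nonneg_right (norm_nonneg _)).trans (hsum t ht))
    (fun t ht => (le_add_of_nonneg_left (norm_nonneg _)).trans (hsum t ht))

theorem exists_norm_sub_exp_mul_le (hT : 0 ≤ T) (haa' : IsPrimitiveOn a a' 0 T)
    (hb : ContinuousOn b (Icc 0 T)) :
    ∃ C > 0, ∀ κ : ℂ, κ ≠ 0 → ∀ u v, IsSplitSol κ a b u v T → ∀ x ∈ Icc 0 T,
      ‖u x - Complex.exp (κ * x) * u 0‖ ≤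
        C / ‖κ‖ * Real.exp (|κ.re| * x) * (‖u 0‖ + ‖v 0‖) := by
  have hacont := haa'.continuousOn
  rw [uIcc_of_le hT] at hacont
  obtain ⟨Ma, ha⟩ := isCompact_Icc.exists_bound_of_continuousOn hacont
  obtain ⟨Mb, hb⟩ := isCompact_Icc.exists_bound_of_continuousOn hb
  set M := max Ma Mb
  replace ha : ∀ t ∈ Icc 0 T, ‖a t‖ ≤ M := fun t ht => (ha t ht).trans (le_max_left _ _)
  replace hb : ∀ t ∈ Icc 0 T, ‖b t‖ ≤ M := fun t ht => (hb t ht).trans (le_max_right _ _)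
  have hM : 0 ≤ M := (norm_nonneg _).trans (ha 0 (left_mem_Icc.2 hT))
  set J := ∫ t in 0..T, (‖a' t‖ + M ^ 2)
  have hJ : 0 ≤ J := intervalIntegral.integral_nonneg hT fun t _ => by positivity
  have hJmono : ∀ x ∈ Icc 0 T, ∫ t in 0..x, (‖a' t‖ + M ^ 2) ≤ J := fun x hx =>
    intervalIntegral.integral_mono_interval le_rfl hx.1 hx.2
      (.of_forall fun t => by positivity)
      (haa'.intervalIntegrable.norm.add intervalIntegrable_const)
  refine ⟨(2 * M + J) * Real.exp (M * T) + 1, by positivity, fun κ hκ u v h x hx => ?_⟩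
  have hx' : x ∈ uIcc 0 T := Icc_subset_uIcc hx
  rw [div_mul_eq_mul_div, div_mul_eq_mul_div, le_div_iff₀' (norm_pos_iff.2 hκ)]
  calc ‖κ‖ * ‖u x - Complex.exp (κ * x) * u 0‖
      ≤ 2 * ‖κ‖ * ‖u x - Complex.exp (κ * x) * u 0‖ := by
        gcongr
        exact le_mul_of_one_le_left (norm_nonneg _) one_le_two
    _ ≤ (2 * M + ∫ t in 0..x, (‖a' t‖ + M ^ 2)) * ((‖u 0‖ + ‖v 0‖) * Real.exp (M * x)) *
          Real.exp (|κ.re| * x) :=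
        (h.mono hx').norm_mul_norm_sub_exp_mul_le hx.1 (haa'.mono hx')
          (fun t ht => ha t (Icc_subset_Icc_right hx.2 ht))
          (fun t ht => hb t (Icc_subset_Icc_right hx.2 ht))
    _ ≤ (2 * M + J) * ((‖u 0‖ + ‖v 0‖) * Real.exp (M * T)) * Real.exp (|κ.re| * x) := by
        gcongr
        exacts [hJmono x hx, hx.2]
    _ ≤ ((2 * M + J) * Real.exp (M * T) + 1) * Real.exp (|κ.re| * x) * (‖u 0‖ + ‖v 0‖) := by
        have hnonneg : 0 ≤ Real.exp (|κ.re| * x) * (‖u 0‖ + ‖v 0‖) := by positivity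
        linear_combination hnonneg

end IsSplitSol

section Dirac

variable {p q f : ℝ → ℂ} {T : ℝ} {lam c : ℂ} {y : ℝ → ℂ × ℂ}

theorem absContOn_iff_exists_isPrimitiveOn (hT : 0 ≤ T) :
    AbsContOn f T ↔ ∃ f', IsPrimitiveOn f f' 0 T :=
  ⟨fun ⟨f', hf', h⟩ => ⟨f', hf', uIcc_of_le hT ▸ h⟩,
    fun ⟨f', h⟩ => ⟨f', h.intervalIntegrable, uIcc_of_le hT ▸ h.eq_add_integral⟩⟩

theorem IsDiracSol.isPrimitiveOn_fst (hy : IsDiracSol p q T lam y) (hT : 0 ≤ T)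
    (hp : ContinuousOn p (Icc 0 T)) (hq : ContinuousOn q (Icc 0 T)) :
    IsPrimitiveOn (fun t => (y t).1) (fun t => q t * (y t).1 - (p t + lam) * (y t).2) 0 T where
  intervalIntegrable := by
    have hycont := hy.1
    exact ContinuousOn.intervalIntegrable_of_Icc hT (by fun_prop)
  eq_add_integral x hx := (hy.2 x (uIcc_of_le hT ▸ hx)).1

theorem IsDiracSol.isPrimitiveOn_snd (hy : IsDiracSol p q T lam y) (hT : 0 ≤ T)
    (hp : ContinuousOn p (Icc 0 T)) (hq : ContinuousOn q (Icc 0 T)) :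
    IsPrimitiveOn (fun t => (y t).2) (fun t => (lam - p t) * (y t).1 - q t * (y t).2) 0 T where
  intervalIntegrable := by
    have hycont := hy.1
    exact ContinuousOn.intervalIntegrable_of_Icc hT (by fun_prop)
  eq_add_integral x hx := (hy.2 x (uIcc_of_le hT ▸ hx)).2

theorem IsDiracSol.isSplitSol (hy : IsDiracSol p q T lam y) (hT : 0 ≤ T)
    (hp : ContinuousOn p (Icc 0 T)) (hq : ContinuousOn q (Icc 0 T)) (hc : c * c = -1) :
    IsSplitSol (c * lam) (fun t => q t + -c * p t) (fun t => q t + c * p t)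
      (fun t => (y t).1 + c * (y t).2) (fun t => (y t).1 + -c * (y t).2) T where
  left := ((hy.isPrimitiveOn_fst hT hp hq).add
    ((hy.isPrimitiveOn_snd hT hp hq).const_mul c)).congr_deriv fun t _ => by
      linear_combination -(lam + p t) * (y t).2 * hc
  right := ((hy.isPrimitiveOn_fst hT hp hq).add
    ((hy.isPrimitiveOn_snd hT hp hq).const_mul (-c))).congr_deriv fun t _ => by
      linear_combination -(lam + p t) * (y t).2 * hc

theorem norm_eq_one_of_mul_self_eq_neg_one (hc : c * c = -1) : ‖c‖ = 1 :=
  Complex.norm_eq_one_of_pow_eq_one (n := 4) (by linear_combination (c ^ 2 - 1) * hc) (by simp)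

theorem eq_I_or_eq_neg_I_of_mul_self_eq_neg_one (hc : c * c = -1) :
    c = Complex.I ∨ c = -Complex.I :=
  mul_self_eq_mul_self_iff.1 (hc.trans Complex.I_mul_I.symm)

theorem abs_re_mul_of_mul_self_eq_neg_one (hc : c * c = -1) (z : ℂ) : |(c * z).re| = |z.im| := by
  obtain rfl | rfl := eq_I_or_eq_neg_I_of_mul_self_eq_neg_one hc <;> simp

theorem exp_mul_of_mul_self_eq_neg_one (hc : c * c = -1) (z : ℂ) :
    Complex.exp (c * z) = Complex.cos z + c * Complex.sin z := by
  obtain rfl | rfl := eq_I_or_eq_neg_I_of_mul_self_eq_neg_one hc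
  · rw [mul_comm, Complex.exp_mul_I, mul_comm Complex.I]
  · rw [neg_mul_comm, mul_comm, Complex.exp_mul_I, Complex.cos_neg, Complex.sin_neg]
    ring

theorem cos_mul_sub_sin_mul_add_mul_of_mul_self_eq_neg_one (hc : c * c = -1) (θ z w : ℂ) :
    Complex.cos θ * z - Complex.sin θ * w + c * (Complex.sin θ * z + Complex.cos θ * w) =
      Complex.exp (c * θ) * (z + c * w) := by
  rw [exp_mul_of_mul_self_eq_neg_one hc]
  linear_combination -Complex.sin θ * w * hc

theorem norm_fst_add_mul_snd_le {z : ℂ × ℂ} (hc : ‖c‖ = 1) : ‖z.1 + c * z.2‖ ≤ 2 * ‖z‖ :=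
  calc ‖z.1 + c * z.2‖ ≤ ‖z.1‖ + ‖c * z.2‖ := norm_add_le _ _
    _ = ‖z.1‖ + ‖z.2‖ := by rw [norm_mul, hc, one_mul]
    _ ≤ 2 * ‖z‖ := by linarith [norm_fst_le z, norm_snd_le z]

theorem norm_le_of_norm_fst_add_I_mul_snd_le {z : ℂ × ℂ} {D : ℝ}
    (hadd : ‖z.1 + Complex.I * z.2‖ ≤ D) (hsub : ‖z.1 + -Complex.I * z.2‖ ≤ D) : ‖z‖ ≤ D := by
  have hfst : 2 * ‖z.1‖ ≤ D + D := by
    convert norm_add_le_of_le hadd hsub using 1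
    rw [← Complex.norm_ofNat, ← norm_mul]
    ring_nf
  have hsnd : 2 * ‖z.2‖ ≤ D + D := by
    convert norm_sub_le_of_le hadd hsub using 1
    rw [show z.1 + Complex.I * z.2 - (z.1 + -Complex.I * z.2) = 2 * Complex.I * z.2 by ring]
    simp
  exact norm_prod_le_iff.2 ⟨by linarith, by linarith⟩

theorem exists_norm_fst_add_mul_snd_sub_le (hT : 0 ≤ T) (hp : AbsContOn p T)
    (hq : AbsContOn q T) (hc : c * c = -1) :
    ∃ C > 0, ∀ lam : ℂ, lam ≠ 0 → ∀ y, IsDiracSol p q T lam y → ∀ x ∈ Icc 0 T,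
      ‖((y x).1 - (Complex.cos (lam * x) * (y 0).1 - Complex.sin (lam * x) * (y 0).2)) +
          c * ((y x).2 - (Complex.sin (lam * x) * (y 0).1 + Complex.cos (lam * x) * (y 0).2))‖ ≤
        C / ‖lam‖ * Real.exp (|lam.im| * x) * ‖y 0‖ := by
  obtain ⟨p', hp'⟩ := (absContOn_iff_exists_isPrimitiveOn hT).1 hp
  obtain ⟨q', hq'⟩ := (absContOn_iff_exists_isPrimitiveOn hT).1 hq
  have hpcont : ContinuousOn p (Icc 0 T) := uIcc_of_le hT ▸ hp'.continuousOn
  have hqcont : ContinuousOn q (Icc 0 T) := uIcc_of_le hT ▸ hq'.continuousOn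
  obtain ⟨C, hC, hbound⟩ := IsSplitSol.exists_norm_sub_exp_mul_le hT
    (hq'.add (hp'.const_mul (-c))) (b := fun t => q t + c * p t) (by fun_prop)
  have hnorm : ‖c‖ = 1 := norm_eq_one_of_mul_self_eq_neg_one hc
  have hc0 : c ≠ 0 := norm_ne_zero_iff.1 (hnorm ▸ one_ne_zero)
  refine ⟨4 * C, by positivity, fun lam hlam y hy x hx => ?_⟩
  rw [mul_sub, sub_add_sub_comm, cos_mul_sub_sin_mul_add_mul_of_mul_self_eq_neg_one hc,
    ← mul_assoc]
  refine (hbound _ (mul_ne_zero hc0 hlam) _ _ (hy.isSplitSol hT hpcont hqcont hc) x hx).trans ?_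
  rw [norm_mul, hnorm, one_mul, abs_re_mul_of_mul_self_eq_neg_one hc]
  calc C / ‖lam‖ * Real.exp (|lam.im| * x) *
        (‖(y 0).1 + c * (y 0).2‖ + ‖(y 0).1 + -c * (y 0).2‖)
      ≤ C / ‖lam‖ * Real.exp (|lam.im| * x) * (2 * ‖y 0‖ + 2 * ‖y 0‖) := by
        gcongr
        exacts [norm_fst_add_mul_snd_le hnorm, norm_fst_add_mul_snd_le ((norm_neg c).trans hnorm)]
    _ = 4 * C / ‖lam‖ * Real.exp (|lam.im| * x) * ‖y 0‖ := by ring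

end Dirac

theorem statement3_general {T : ℝ} (hT : 0 ≤ T) {p q : ℝ → ℂ} (hp : AbsContOn p T)
    (hq : AbsContOn q T) :
    ∃ C > 0, ∀ lam : ℂ, lam ≠ 0 → ∀ y, IsDiracSol p q T lam y → ∀ x ∈ Icc 0 T,
      ‖y x - (Complex.cos (lam * x) * (y 0).1 - Complex.sin (lam * x) * (y 0).2,
          Complex.sin (lam * x) * (y 0).1 + Complex.cos (lam * x) * (y 0).2)‖ ≤
        C / ‖lam‖ * Real.exp (|lam.im| * x) * ‖y 0‖ := by
  obtain ⟨C₁, hC₁, hadd⟩ := exists_norm_fst_add_mul_snd_sub_le hT hp hq Complex.I_mul_I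
  obtain ⟨C₂, _, hsub⟩ := exists_norm_fst_add_mul_snd_sub_le hT hp hq
    ((neg_mul_neg _ _).trans Complex.I_mul_I)
  refine ⟨max C₁ C₂, lt_max_of_lt_left hC₁, fun lam hlam y hy x hx =>
    norm_le_of_norm_fst_add_I_mul_snd_le ((hadd lam hlam y hy x hx).trans ?_)
      ((hsub lam hlam y hy x hx).trans ?_)⟩ <;> gcongr
  exacts [le_max_left _ _, le_max_right _ _]

/-- **Asymptotics of the fundamental solutions** `X₁, X₂`: there is `C > 0` such that for
`|λ| ≥ 1` and `x ∈ [0,T]`,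
`‖X₁(x,λ) - (cos λx, sin λx)ᵀ‖ ≤ (C/|λ|) e^{|Im λ| x}` and
`‖X₂(x,λ) - (-sin λx, cos λx)ᵀ‖ ≤ (C/|λ|) e^{|Im λ| x}`. -/
theorem statement3
    (T : ℝ) (hT : 0 < T)
    (p q : ℝ → ℂ) (hp : AbsContOn p T) (hq : AbsContOn q T)
    (X₁ X₂ : ℂ → ℝ → ℂ × ℂ)
    (hX₁ : ∀ lam, IsDiracSol p q T lam (X₁ lam) ∧ X₁ lam 0 = (1, 0))
    (hX₂ : ∀ lam, IsDiracSol p q T lam (X₂ lam) ∧ X₂ lam 0 = (0, 1)) :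
    ∃ C > (0 : ℝ), ∀ lam : ℂ, 1 ≤ ‖lam‖ → ∀ x ∈ Icc (0 : ℝ) T,
      ‖X₁ lam x - (Complex.cos (lam * (x : ℂ)), Complex.sin (lam * (x : ℂ)))‖ ≤
        C / ‖lam‖ * Real.exp (|lam.im| * x) ∧
      ‖X₂ lam x - (-Complex.sin (lam * (x : ℂ)), Complex.cos (lam * (x : ℂ)))‖ ≤
        C / ‖lam‖ * Real.exp (|lam.im| * x) := by
  obtain ⟨C, hC, h⟩ := statement3_general hT.le hp hq
  refine ⟨C, hC, fun lam hlam x hx => ?_⟩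
  have hlam0 : lam ≠ 0 := norm_pos_iff.1 (one_pos.trans_le hlam)
  exact ⟨by simpa [(hX₁ lam).2] using h lam hlam0 _ (hX₁ lam).1 x hx,
    by simpa [(hX₂ lam).2] using h lam hlam0 _ (hX₂ lam).1 x hx⟩
end
end

section
/- Existence of a Birkhoff-type fundamental system: There exist constants C > 0 and R ≥ 1 such that for every λ with Im λ ≥ 0 and |λ| ≥ R there exist solutions Y₁(·,λ), Y₂(·,λ) of the Dirac system with: (i) ‖e^{−iλx} Y₁(x,λ) − (1,−i)ᵀ‖ ≤ C/|λ| for all x ∈ [0,T]; (ii) ‖e^{iλx} Y₂(x,λ) − (1,i)ᵀ‖ ≤ C/|λ| for all x ∈ [0,T]; (iii) the Wronskian satisfies |Y₁,₁(x,λ)Y₂,₂(x,λ) − Y₁,₂(x,λ)Y₂,₁(x,λ) − 2i| ≤ C/|λ|. The analogous statement holds for Im λ ≤ 0. -/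
open MeasureTheory Set Filter

noncomputable section

/-
In the ansatz `y = e^{iλx} (U (1, -i)ᵀ + V (1, i)ᵀ)` the Dirac system becomes `U' = a V`,
`V' = μ V + b U` with `μ = -2iλ`, `a = q - ip`, `b = q + ip`. If the Volterra equation for `V` is
based at the endpoint `c` of `[0, T]` for which `Re μ (x - c) ≤ 0`, its kernel `e^{μ(x - t)}` is
bounded and has integrals `O(1/|μ|)`. Integration by parts, in the form of Fubini on a triangle,
preserves this order against factors with integrable derivative: against `b` by absolute
continuity, and against `U = 1 + ∫ a V` with a bound linear in `V`. Hence the Volterra map is a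
contraction for large `|μ|`, its fixed point is `O(1/|μ|)`, and so is `U - 1`. A second solution
comes from the symmetry `(y₁, y₂, p, λ) ↦ (y₁, -y₂, -p, -λ)`, and the Wronskian estimate follows by
bilinearity.
-/

theorem integral_mul_integral_eq_integral_integral_mul_of_le {𝕜 : Type*} [RCLike 𝕜] {f g : ℝ → 𝕜}
    {a b : ℝ} (hab : a ≤ b) (hf : IntervalIntegrable f volume a b)
    (hg : IntervalIntegrable g volume a b) :
    ∫ t in a..b, f t * ∫ r in a..t, g r = ∫ r in a..b, (∫ t in r..b, f t) * g r := by
  let F : ℝ → ℝ → 𝕜 := fun t r => {z : ℝ × ℝ | z.2 ≤ z.1}.indicator (fun z => f z.1 * g z.2) (t, r)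
  have hF : IntegrableOn (Function.uncurry F) (uIoc a b ×ˢ uIoc a b) := by
    rw [IntegrableOn, Measure.volume_eq_prod, ← Measure.prod_restrict]
    exact (hf.def'.mul_prod hg.def').indicator (measurableSet_le measurable_snd measurable_fst)
  have inner_right : EqOn (fun t => f t * ∫ r in a..t, g r) (fun t => ∫ r in a..b, F t r)
      (Ioo a b) := by
    intro t ht
    simp only [F]
    rw [← intervalIntegral.integral_indicator (Ioo_subset_Icc_self ht),
      ← intervalIntegral.integral_const_mul]
    simp only [indicator_apply, mem_ofPred_eq, mul_ite, mul_zero]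
  have inner_left : EqOn (fun r => ∫ t in a..b, F t r) (fun r => (∫ t in r..b, f t) * g r)
      (Ioo a b) := by
    intro r hr
    have hF_r : (fun t => F t r) = (Ici r).indicator fun t => f t * g r := by
      ext t; simp only [F, indicator_apply, mem_ofPred_eq, mem_Ici]
    have hIcc : Ioc a b ∩ Ici r = Icc r b := by
      ext t; simp only [mem_inter_iff, mem_Ioc, mem_Ici, mem_Icc]; grind
    simp only
    rw [← intervalIntegral.integral_mul_const, intervalIntegral.integral_of_le hab,
      intervalIntegral.integral_of_le hr.2.le, hF_r, setIntegral_indicator measurableSet_Ici, hIcc,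
      integral_Icc_eq_integral_Ioc]
  calc ∫ t in a..b, f t * ∫ r in a..t, g r
      = ∫ t in a..b, ∫ r in a..b, F t r :=
        intervalIntegral.integral_congr_Ioo_of_le hab inner_right
    _ = ∫ r in a..b, ∫ t in a..b, F t r := intervalIntegral_intervalIntegral_swap hF
    _ = ∫ r in a..b, (∫ t in r..b, f t) * g r :=
        intervalIntegral.integral_congr_Ioo_of_le hab inner_left

theorem integral_mul_integral_eq_integral_integral_mul {𝕜 : Type*} [RCLike 𝕜] {f g : ℝ → 𝕜}
    {a b : ℝ} (hf : IntervalIntegrable f volume a b) (hg : IntervalIntegrable g volume a b) :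
    ∫ t in a..b, f t * ∫ r in a..t, g r = ∫ r in a..b, (∫ t in r..b, f t) * g r := by
  rcases le_total a b with hab | hba
  · exact integral_mul_integral_eq_integral_integral_mul_of_le hab hf hg
  · have h := integral_mul_integral_eq_integral_integral_mul_of_le hba hg.symm hf.symm
    have flip_g (t) : ∫ r in a..t, g r = -∫ r in t..a, g r := intervalIntegral.integral_symm t a
    have flip_f (r) : ∫ t in r..b, f t = -∫ t in b..r, f t := intervalIntegral.integral_symm b r
    rw [intervalIntegral.integral_symm b a, intervalIntegral.integral_symm b a, neg_inj]
    simp only [flip_g, flip_f, mul_neg, neg_mul, intervalIntegral.integral_neg, neg_inj]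
    simpa only [mul_comm] using h.symm

theorem norm_integral_mul_add_integral_le {𝕜 : Type*} [RCLike 𝕜] {k h : ℝ → 𝕜} {s x κ : ℝ}
    (hk : IntervalIntegrable k volume s x) (hh : IntervalIntegrable h volume s x)
    (hκ : ∀ r ∈ uIcc s x, ‖∫ t in r..x, k t‖ ≤ κ) (z : 𝕜) :
    ‖∫ t in s..x, k t * (z + ∫ r in s..t, h r)‖ ≤ κ * (‖z‖ + |∫ r in s..x, ‖h r‖|) := by
  have hprim : ContinuousOn (fun t => ∫ r in s..t, h r) (uIcc s x) :=
    intervalIntegral.continuousOn_primitive_interval' hh left_mem_uIcc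
  have hκ0 : 0 ≤ κ := (norm_nonneg _).trans (hκ x right_mem_uIcc)
  have split : ∫ t in s..x, k t * (z + ∫ r in s..t, h r) =
      (∫ t in s..x, k t) * z + ∫ r in s..x, (∫ t in r..x, k t) * h r := by
    simp only [mul_add]
    rw [intervalIntegral.integral_add (hk.mul_const z) (hk.mul_continuousOn hprim),
      intervalIntegral.integral_mul_const, integral_mul_integral_eq_integral_integral_mul hk hh]
  have tail : ‖∫ r in s..x, (∫ t in r..x, k t) * h r‖ ≤ κ * |∫ r in s..x, ‖h r‖| :=
    calc ‖∫ r in s..x, (∫ t in r..x, k t) * h r‖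
        ≤ |∫ r in s..x, κ * ‖h r‖| := by
          refine intervalIntegral.norm_integral_le_abs_of_norm_le
            (ae_restrict_of_forall_mem measurableSet_uIoc fun r hr => ?_) (hh.norm.const_mul κ)
          rw [norm_mul]
          gcongr
          exact hκ r (uIoc_subset_uIcc hr)
      _ = κ * |∫ r in s..x, ‖h r‖| := by
          rw [intervalIntegral.integral_const_mul, abs_mul, abs_of_nonneg hκ0]
  calc ‖∫ t in s..x, k t * (z + ∫ r in s..t, h r)‖
      ≤ ‖∫ t in s..x, k t‖ * ‖z‖ + ‖∫ r in s..x, (∫ t in r..x, k t) * h r‖ := by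
        rw [split, ← norm_mul]; exact norm_add_le _ _
    _ ≤ κ * ‖z‖ + κ * |∫ r in s..x, ‖h r‖| := by gcongr; exact hκ s left_mem_uIcc
    _ = κ * (‖z‖ + |∫ r in s..x, ‖h r‖|) := by ring

theorem mul_sub_nonpos_of_mem_uIcc {m s x r : ℝ} (h : m * (x - s) ≤ 0) (hr : r ∈ uIcc s x) :
    m * (x - r) ≤ 0 := by
  rcases mem_uIcc.1 hr with hr | hr <;> rcases le_total 0 m with hm | hm <;> nlinarith

theorem norm_integral_exp_mul_sub_le {μ : ℂ} (hμ : μ ≠ 0) {s x : ℝ} (hsx : μ.re * (x - s) ≤ 0) :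
    ‖∫ t in s..x, Complex.exp (μ * (x - t))‖ ≤ 2 / ‖μ‖ := by
  have hexp : ‖Complex.exp (μ * (x - s : ℝ))‖ ≤ 1 := by
    rw [Complex.norm_exp, Complex.re_mul_ofReal]
    exact Real.exp_le_one_iff.2 hsx
  have hint : ∫ t in s..x, Complex.exp (μ * (x - t)) = (Complex.exp (μ * (x - s : ℝ)) - 1) / μ := by
    have := intervalIntegral.integral_comp_sub_left (a := s) (b := x)
      (fun y : ℝ => Complex.exp (μ * y)) x
    simpa [integral_exp_mul_complex hμ] using this
  rw [hint, norm_div]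
  gcongr
  calc _ ≤ ‖Complex.exp (μ * (x - s : ℝ))‖ + ‖(1 : ℂ)‖ := norm_sub_le _ _
    _ ≤ 2 := by rw [norm_one]; linarith

theorem hasDerivAt_integral_exp_mul_sub {g : ℝ → ℂ} (hg : Continuous g) (μ : ℂ) (c x : ℝ) :
    HasDerivAt (fun x : ℝ => ∫ t in c..x, Complex.exp (μ * (x - t)) * g t)
      (μ * (∫ t in c..x, Complex.exp (μ * (x - t)) * g t) + g x) x := by
  have factor : ∀ x : ℝ, ∫ t in c..x, Complex.exp (μ * (x - t)) * g t =
      Complex.exp (μ * x) * ∫ t in c..x, Complex.exp (-(μ * t)) * g t := by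
    intro x
    simp only [mul_sub, Complex.exp_sub, Complex.exp_neg, div_eq_mul_inv, mul_assoc,
      intervalIntegral.integral_const_mul]
  have hexp : HasDerivAt (fun x : ℝ => Complex.exp (μ * x)) (Complex.exp (μ * x) * μ) x := by
    simpa using ((hasDerivAt_id (x : ℂ)).const_mul μ).cexp.comp_ofReal
  have hint : HasDerivAt (fun x => ∫ t in c..x, Complex.exp (-(μ * t)) * g t)
      (Complex.exp (-(μ * x)) * g x) x :=
    (Continuous.integral_hasStrictDerivAt (by fun_prop) c x).hasDerivAt
  simp only [factor]
  refine (hexp.mul hint).congr_deriv ?_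
  have hinv : Complex.exp (μ * x) * Complex.exp (-(μ * x)) = 1 := by
    rw [← Complex.exp_add, add_neg_cancel, Complex.exp_zero]
  linear_combination g x * hinv

theorem exists_continuous_eqOn_Icc_of_contracting {E : Type*} [MetricSpace E] [CompleteSpace E]
    [Nonempty E] {α β : ℝ} (hαβ : α ≤ β) (Φ : (ℝ → E) → ℝ → E)
    (hΦ : ∀ f, Continuous f → Continuous (Φ f)) {K : NNReal} (hK : K < 1)
    (hlip : ∀ f g, Continuous f → Continuous g → ∀ N, (∀ x ∈ Icc α β, dist (f x) (g x) ≤ N) →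
      ∀ x ∈ Icc α β, dist (Φ f x) (Φ g x) ≤ K * N) :
    ∃ f, Continuous f ∧ EqOn (Φ f) f (Icc α β) := by
  let ext (f : C(Icc α β, E)) : ℝ → E := IccExtend hαβ f
  have continuous_ext (f) : Continuous (ext f) := f.continuous.Icc_extend'
  let Ψ (f : C(Icc α β, E)) : C(Icc α β, E) :=
    ⟨fun x => Φ (ext f) x, (hΦ _ (continuous_ext f)).comp continuous_subtype_val⟩
  have hΨ : ContractingWith K Ψ := by
    refine ⟨hK, LipschitzWith.of_dist_le_mul fun f g => ?_⟩
    rw [ContinuousMap.dist_le (by positivity)]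
    exact fun x => hlip _ _ (continuous_ext f) (continuous_ext g) _
      (fun _ _ => ContinuousMap.dist_apply_le_dist _) x x.2
  have : Nonempty C(Icc α β, E) := ⟨ContinuousMap.const _ (Classical.arbitrary E)⟩
  obtain ⟨f, hf⟩ : ∃ f, Ψ f = f := ⟨_, hΨ.fixedPoint_isFixedPt⟩
  refine ⟨ext f, continuous_ext f, fun x hx => ?_⟩
  calc Φ (ext f) x = Ψ f ⟨x, hx⟩ := rfl
    _ = ext f x := by rw [hf]; exact (IccExtend_of_mem hαβ f hx).symm

namespace AbsContOn

variable {f g : ℝ → ℂ} {T : ℝ}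

theorem congr (hf : AbsContOn f T) (hfg : EqOn f g (Icc 0 T)) : AbsContOn g T := by
  obtain ⟨h, hh, hfh⟩ := hf
  refine ⟨h, hh, fun x hx => ?_⟩
  rw [← hfg hx, ← hfg (left_mem_Icc.2 (hx.1.trans hx.2)), hfh x hx]

theorem add (hf : AbsContOn f T) (hg : AbsContOn g T) : AbsContOn (fun x => f x + g x) T := by
  obtain ⟨f', hf', hff'⟩ := hf
  obtain ⟨g', hg', hgg'⟩ := hg
  refine ⟨fun t => f' t + g' t, hf'.add hg', fun x hx => ?_⟩
  have hsub : uIcc 0 x ⊆ uIcc 0 T := uIcc_subset_uIcc_left (Icc_subset_uIcc hx)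
  simp only [intervalIntegral.integral_add (hf'.mono_set hsub) (hg'.mono_set hsub), hff' x hx,
    hgg' x hx]
  ring

theorem const_mul (hf : AbsContOn f T) (k : ℂ) : AbsContOn (fun x => k * f x) T := by
  obtain ⟨h, hh, hfh⟩ := hf
  refine ⟨fun t => k * h t, hh.const_mul k, fun x hx => ?_⟩
  simp only [intervalIntegral.integral_const_mul, hfh x hx, mul_add]

theorem neg (hf : AbsContOn f T) : AbsContOn (fun x => -f x) T := by
  simpa only [neg_one_mul] using hf.const_mul (-1)

theorem continuousOn (hf : AbsContOn f T) : ContinuousOn f (Icc 0 T) := by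
  obtain ⟨h, hh, hfh⟩ := hf
  refine ContinuousOn.congr (continuousOn_const.add ?_) hfh
  exact (intervalIntegral.continuousOn_primitive_interval' hh left_mem_uIcc).mono Icc_subset_uIcc

theorem exists_eq_add_integral (hf : AbsContOn f T) :
    ∃ h : ℝ → ℂ, IntervalIntegrable h volume 0 T ∧
      ∀ s ∈ Icc 0 T, ∀ x ∈ Icc 0 T, f x = f s + ∫ t in s..x, h t := by
  obtain ⟨h, hh, hfh⟩ := hf
  have hint : ∀ x ∈ Icc 0 T, IntervalIntegrable h volume 0 x := fun x hx =>
    hh.mono_set (uIcc_subset_uIcc_left (Icc_subset_uIcc hx))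
  refine ⟨h, hh, fun s hs x hx => ?_⟩
  rw [← intervalIntegral.integral_interval_sub_left (hint x hx) (hint s hs), hfh x hx, hfh s hs]
  ring

theorem exists_norm_integral_exp_mul_le (hf : AbsContOn f T) :
    ∃ M : ℝ, 0 ≤ M ∧ ∀ μ : ℂ, μ ≠ 0 → ∀ s ∈ Icc 0 T, ∀ x ∈ Icc 0 T, μ.re * (x - s) ≤ 0 →
      ‖∫ t in s..x, Complex.exp (μ * (x - t)) * f t‖ ≤ M / ‖μ‖ := by
  obtain ⟨B, hB⟩ := isCompact_Icc.exists_bound_of_continuousOn hf.continuousOn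
  obtain ⟨h, hh, hfh⟩ := hf.exists_eq_add_integral
  refine ⟨2 * (|B| + |∫ t in 0..T, ‖h t‖|), by positivity, fun μ hμ s hs x hx hsx => ?_⟩
  have hsub : uIcc s x ⊆ Icc 0 T := ordConnected_Icc.uIcc_subset hs hx
  have hsub' : uIcc s x ⊆ uIcc 0 T := hsub.trans Icc_subset_uIcc
  have hh_le : |∫ t in s..x, ‖h t‖| ≤ |∫ t in 0..T, ‖h t‖| :=
    intervalIntegral.abs_integral_mono_interval (uIoc_subset_uIoc_of_uIcc_subset_uIcc hsub')
      (Eventually.of_forall fun t => norm_nonneg (h t)) hh.norm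
  calc ‖∫ t in s..x, Complex.exp (μ * (x - t)) * f t‖
      = ‖∫ t in s..x, Complex.exp (μ * (x - t)) * (f s + ∫ r in s..t, h r)‖ := by
        congr 1
        refine intervalIntegral.integral_congr fun t ht => ?_
        simp only [hfh s hs t (hsub ht)]
    _ ≤ 2 / ‖μ‖ * (‖f s‖ + |∫ t in s..x, ‖h t‖|) :=
        norm_integral_mul_add_integral_le (Continuous.intervalIntegrable (by fun_prop) _ _)
          (hh.mono_set hsub')
          (fun r hr => norm_integral_exp_mul_sub_le hμ (mul_sub_nonpos_of_mem_uIcc hsx hr)) _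
    _ ≤ 2 / ‖μ‖ * (|B| + |∫ t in 0..T, ‖h t‖|) := by
        gcongr
        exact (hB s hs).trans (le_abs_self B)
    _ = 2 * (|B| + |∫ t in 0..T, ‖h t‖|) / ‖μ‖ := by ring

end AbsContOn

/-- The slow amplitude `U` attached to a fast amplitude `V`: the solution of `U' = a V` with
`U(c) = 1`. -/
def slowAmplitude (a : ℝ → ℂ) (c : ℝ) (V : ℝ → ℂ) (x : ℝ) : ℂ :=
  1 + ∫ t in c..x, a t * V t

/-- The Volterra map whose fixed points are the fast amplitudes `V` with `V' = μ V + b U`,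
`V(c) = 0`, where `U` is the slow amplitude attached to `V`. -/
def volterraMap (a b : ℝ → ℂ) (μ : ℂ) (c : ℝ) (V : ℝ → ℂ) (x : ℝ) : ℂ :=
  ∫ t in c..x, Complex.exp (μ * (x - t)) * b t * slowAmplitude a c V t

/-- `κ` bounds the integrals of the Volterra kernel `e^{μ(x-t)} b(t)` over every final piece of
the interval from the base point `c` to a point `x` of `[0, T]`. -/
def IsKernelBound (b : ℝ → ℂ) (μ : ℂ) (c T κ : ℝ) : Prop :=
  ∀ x ∈ Icc 0 T, ∀ r ∈ uIcc c x, ‖∫ t in r..x, Complex.exp (μ * (x - t)) * b t‖ ≤ κ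

/-- `U` and `V` solve `U' = a V`, `V' = μ V + b U` on `[0, T]`. For `μ = -2iλ`, `a = q - ip` and
`b = q + ip`, this is the system satisfied by the amplitudes in
`y = e^{iλx} (U (1, -i)ᵀ + V (1, i)ᵀ)` when `y` solves the Dirac system. -/
structure IsAmplitudeSol (a b : ℝ → ℂ) (T : ℝ) (μ : ℂ) (U V : ℝ → ℂ) : Prop where
  hasDerivAt_slow : ∀ x ∈ Icc 0 T, HasDerivAt U (a x * V x) x
  hasDerivAt_fast : ∀ x ∈ Icc 0 T, HasDerivAt V (μ * V x + b x * U x) x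

section Amplitude

variable {a b : ℝ → ℂ} {μ : ℂ} {c T A κ N : ℝ}

theorem hasDerivAt_slowAmplitude (ha : Continuous a) {V : ℝ → ℂ} (hV : Continuous V) (x : ℝ) :
    HasDerivAt (slowAmplitude a c V) (a x * V x) x :=
  ((ha.mul hV).integral_hasStrictDerivAt c x).hasDerivAt.const_add 1

theorem continuous_slowAmplitude (ha : Continuous a) {V : ℝ → ℂ} (hV : Continuous V) :
    Continuous (slowAmplitude a c V) :=
  continuous_iff_continuousAt.2 fun x => (hasDerivAt_slowAmplitude ha hV x).continuousAt

theorem hasDerivAt_volterraMap (ha : Continuous a) (hb : Continuous b) {V : ℝ → ℂ}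
    (hV : Continuous V) (x : ℝ) :
    HasDerivAt (volterraMap a b μ c V)
      (μ * volterraMap a b μ c V x + b x * slowAmplitude a c V x) x := by
  have hbU : Continuous fun t => b t * slowAmplitude a c V t :=
    hb.mul (continuous_slowAmplitude ha hV)
  have hvolterra : volterraMap a b μ c V =
      fun x : ℝ => ∫ t in c..x, Complex.exp (μ * (x - t)) * (b t * slowAmplitude a c V t) := by
    ext x
    simp only [volterraMap, mul_assoc]
  rw [hvolterra]
  exact hasDerivAt_integral_exp_mul_sub hbU μ c x

theorem continuous_volterraMap (ha : Continuous a) (hb : Continuous b) {V : ℝ → ℂ}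
    (hV : Continuous V) : Continuous (volterraMap a b μ c V) :=
  continuous_iff_continuousAt.2 fun x => (hasDerivAt_volterraMap ha hb hV x).continuousAt

theorem abs_integral_norm_mul_le {V : ℝ → ℂ} (hA : ∀ x ∈ Icc 0 T, ‖a x‖ ≤ A)
    (hN : ∀ x ∈ Icc 0 T, ‖V x‖ ≤ N) (hc : c ∈ Icc 0 T) {x : ℝ} (hx : x ∈ Icc 0 T) :
    |∫ t in c..x, ‖a t * V t‖| ≤ A * T * N := by
  have hA₀ : 0 ≤ A := (norm_nonneg _).trans (hA c hc)
  have hN₀ : 0 ≤ N := (norm_nonneg _).trans (hN c hc)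
  have hlen : |x - c| ≤ T := by rw [abs_le]; constructor <;> linarith [hx.1, hx.2, hc.1, hc.2]
  have hbound : ∀ t ∈ uIoc c x, ‖‖a t * V t‖‖ ≤ A * N := by
    intro t ht
    have ht' : t ∈ Icc 0 T := ordConnected_Icc.uIcc_subset hc hx (uIoc_subset_uIcc ht)
    rw [norm_norm, norm_mul]
    exact mul_le_mul (hA t ht') (hN t ht') (norm_nonneg _) hA₀
  calc |∫ t in c..x, ‖a t * V t‖| ≤ A * N * |x - c| :=
        intervalIntegral.norm_integral_le_of_norm_le_const hbound
    _ ≤ A * N * T := by gcongr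
    _ = A * T * N := by ring

theorem IsKernelBound.norm_integral_mul_le (hκ : IsKernelBound b μ c T κ) (ha : Continuous a)
    (hb : Continuous b) (hA : ∀ x ∈ Icc 0 T, ‖a x‖ ≤ A) (hc : c ∈ Icc 0 T) {V : ℝ → ℂ}
    (hV : Continuous V) (hN : ∀ x ∈ Icc 0 T, ‖V x‖ ≤ N) (z : ℂ) {x : ℝ} (hx : x ∈ Icc 0 T) :
    ‖∫ t in c..x, Complex.exp (μ * (x - t)) * b t * (z + ∫ r in c..t, a r * V r)‖ ≤
      κ * (‖z‖ + A * T * N) := by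
  have hκ₀ : 0 ≤ κ := (norm_nonneg _).trans (hκ x hx c left_mem_uIcc)
  refine (norm_integral_mul_add_integral_le (Continuous.intervalIntegrable (by fun_prop) _ _)
    ((ha.mul hV).intervalIntegrable _ _) (hκ x hx) z).trans ?_
  gcongr
  exact abs_integral_norm_mul_le hA hN hc hx

theorem volterraMap_sub (ha : Continuous a) (hb : Continuous b) {V W : ℝ → ℂ} (hV : Continuous V)
    (hW : Continuous W) (x : ℝ) :
    volterraMap a b μ c V x - volterraMap a b μ c W x =
      ∫ t in c..x, Complex.exp (μ * (x - t)) * b t * (0 + ∫ r in c..t, a r * (V r - W r)) := by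
  have hUV : Continuous (slowAmplitude a c V) := continuous_slowAmplitude ha hV
  have hUW : Continuous (slowAmplitude a c W) := continuous_slowAmplitude ha hW
  have hslow (t : ℝ) : slowAmplitude a c V t - slowAmplitude a c W t =
      0 + ∫ r in c..t, a r * (V r - W r) := by
    simp only [mul_sub]
    rw [intervalIntegral.integral_sub (Continuous.intervalIntegrable (by fun_prop) _ _)
      (Continuous.intervalIntegrable (by fun_prop) _ _), slowAmplitude, slowAmplitude]
    ring
  rw [volterraMap, volterraMap, ← intervalIntegral.integral_sub
    (Continuous.intervalIntegrable (by fun_prop) _ _)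
    (Continuous.intervalIntegrable (by fun_prop) _ _)]
  simp only [← mul_sub (Complex.exp _ * _), hslow]

theorem exists_eqOn_volterraMap (hκ : IsKernelBound b μ c T κ) (ha : Continuous a)
    (hb : Continuous b) (hA : ∀ x ∈ Icc 0 T, ‖a x‖ ≤ A) (hc : c ∈ Icc 0 T)
    (hsmall : κ * (A * T) ≤ 1 / 2) :
    ∃ V, Continuous V ∧ EqOn (volterraMap a b μ c V) V (Icc 0 T) := by
  refine exists_continuous_eqOn_Icc_of_contracting (hc.1.trans hc.2) _
    (fun V hV => continuous_volterraMap ha hb hV) (K := 1 / 2) (by norm_num) ?_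
  intro V W hV hW N hN x hx
  have hN₀ : 0 ≤ N := dist_nonneg.trans (hN c hc)
  simp only [dist_eq_norm] at hN ⊢
  calc ‖volterraMap a b μ c V x - volterraMap a b μ c W x‖
      ≤ κ * (‖(0 : ℂ)‖ + A * T * N) := by
        rw [volterraMap_sub ha hb hV hW]
        exact hκ.norm_integral_mul_le ha hb hA hc (hV.sub hW) hN 0 hx
    _ = κ * (A * T) * N := by rw [norm_zero]; ring
    _ ≤ 1 / 2 * N := by gcongr
    _ = (1 / 2 : NNReal) * N := by norm_num

theorem norm_le_of_eqOn_volterraMap (hκ : IsKernelBound b μ c T κ) (ha : Continuous a)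
    (hb : Continuous b) (hA : ∀ x ∈ Icc 0 T, ‖a x‖ ≤ A) (hc : c ∈ Icc 0 T)
    (hsmall : κ * (A * T) ≤ 1 / 2) {V : ℝ → ℂ} (hV : Continuous V)
    (hfix : EqOn (volterraMap a b μ c V) V (Icc 0 T)) : ∀ x ∈ Icc 0 T, ‖V x‖ ≤ 2 * κ := by
  obtain ⟨x₀, hx₀, hmax⟩ := isCompact_Icc.exists_isMaxOn ⟨c, hc⟩ hV.norm.continuousOn
  have hself : ‖V x₀‖ ≤ κ * (‖(1 : ℂ)‖ + A * T * ‖V x₀‖) :=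
    calc ‖V x₀‖ = ‖volterraMap a b μ c V x₀‖ := by rw [hfix hx₀]
      _ ≤ _ := hκ.norm_integral_mul_le ha hb hA hc hV (fun x hx => hmax hx) 1 hx₀
  have habsorb : κ * (A * T) * ‖V x₀‖ ≤ 1 / 2 * ‖V x₀‖ := by gcongr
  rw [norm_one] at hself
  exact fun x hx => (hmax hx).trans (by linarith)

theorem IsKernelBound.exists_isAmplitudeSol (hκ : IsKernelBound b μ c T κ) (ha : Continuous a)
    (hb : Continuous b) (hA : ∀ x ∈ Icc 0 T, ‖a x‖ ≤ A) (hc : c ∈ Icc 0 T)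
    (hsmall : κ * (A * T) ≤ 1 / 2) :
    ∃ U V, IsAmplitudeSol a b T μ U V ∧
      ∀ x ∈ Icc 0 T, ‖U x - 1‖ ≤ 2 * (A * T) * κ ∧ ‖V x‖ ≤ 2 * κ := by
  obtain ⟨V, hV, hfix⟩ := exists_eqOn_volterraMap hκ ha hb hA hc hsmall
  have hV_le : ∀ x ∈ Icc 0 T, ‖V x‖ ≤ 2 * κ :=
    norm_le_of_eqOn_volterraMap hκ ha hb hA hc hsmall hV hfix
  refine ⟨slowAmplitude a c V, volterraMap a b μ c V, ⟨fun x hx => ?_, fun x _ => ?_⟩,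
    fun x hx => ⟨?_, ?_⟩⟩
  · rw [hfix hx]
    exact hasDerivAt_slowAmplitude ha hV x
  · exact hasDerivAt_volterraMap ha hb hV x
  · calc ‖slowAmplitude a c V x - 1‖ = ‖∫ t in c..x, a t * V t‖ := by
          rw [slowAmplitude, add_sub_cancel_left]
      _ ≤ |∫ t in c..x, ‖a t * V t‖| := intervalIntegral.norm_integral_le_abs_integral_norm
      _ ≤ A * T * (2 * κ) := abs_integral_norm_mul_le hA hV_le hc hx
      _ = 2 * (A * T) * κ := by ring
  · rw [hfix hx]
    exact hV_le x hx

theorem exists_mem_Icc_forall_mul_sub_nonpos (hT : 0 ≤ T) (m : ℝ) :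
    ∃ c ∈ Icc 0 T, ∀ x ∈ Icc 0 T, m * (x - c) ≤ 0 := by
  rcases le_total 0 m with hm | hm
  · exact ⟨T, right_mem_Icc.2 hT, fun x hx =>
      mul_nonpos_of_nonneg_of_nonpos hm (sub_nonpos.2 hx.2)⟩
  · exact ⟨0, left_mem_Icc.2 hT, fun x hx =>
      mul_nonpos_of_nonpos_of_nonneg hm (sub_nonneg.2 hx.1)⟩

theorem exists_isKernelBound (hb : AbsContOn b T) (hT : 0 ≤ T) :
    ∃ M, 0 ≤ M ∧ ∀ μ : ℂ, μ ≠ 0 → ∃ c ∈ Icc 0 T, IsKernelBound b μ c T (M / ‖μ‖) := by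
  obtain ⟨M, hM, hbound⟩ := hb.exists_norm_integral_exp_mul_le
  refine ⟨M, hM, fun μ hμ => ?_⟩
  obtain ⟨c, hc, hsign⟩ := exists_mem_Icc_forall_mul_sub_nonpos hT μ.re
  exact ⟨c, hc, fun x hx r hr => hbound μ hμ r (ordConnected_Icc.uIcc_subset hc hx hr) x hx
    (mul_sub_nonpos_of_mem_uIcc (hsign x hx) hr)⟩

theorem exists_isAmplitudeSol_of_continuous (hT : 0 ≤ T) (ha : Continuous a) (hb : Continuous b)
    (hb' : AbsContOn b T) :
    ∃ C, 1 ≤ C ∧ ∀ μ : ℂ, C ≤ ‖μ‖ → ∃ U V, IsAmplitudeSol a b T μ U V ∧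
      ∀ x ∈ Icc 0 T, ‖U x - 1‖ ≤ C / ‖μ‖ ∧ ‖V x‖ ≤ C / ‖μ‖ := by
  obtain ⟨A, hA⟩ := isCompact_Icc.exists_bound_of_continuousOn (s := Icc 0 T) ha.continuousOn
  have hAT : 0 ≤ A * T := mul_nonneg ((norm_nonneg _).trans (hA 0 (left_mem_Icc.2 hT))) hT
  obtain ⟨M, hM, hkernel⟩ := exists_isKernelBound hb' hT
  have hMAT : 0 ≤ M * (A * T) := mul_nonneg hM hAT
  refine ⟨1 + 2 * M + 2 * (M * (A * T)), by linarith, fun μ hμC => ?_⟩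
  have hμ : 0 < ‖μ‖ := by linarith
  obtain ⟨c, hc, hκ⟩ := hkernel μ (norm_pos_iff.1 hμ)
  have hsmall : M / ‖μ‖ * (A * T) ≤ 1 / 2 := by
    rw [div_mul_eq_mul_div, div_le_iff₀ hμ]
    linarith
  obtain ⟨U, V, hUV, hbound⟩ := hκ.exists_isAmplitudeSol ha hb hA hc hsmall
  refine ⟨U, V, hUV, fun x hx => ⟨(hbound x hx).1.trans ?_, (hbound x hx).2.trans ?_⟩⟩
  · rw [← mul_div_assoc]
    gcongr
    linarith
  · rw [← mul_div_assoc]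
    gcongr
    linarith

theorem IsAmplitudeSol.congr {a' b' U V : ℝ → ℂ} (h : IsAmplitudeSol a b T μ U V)
    (ha : EqOn a a' (Icc 0 T)) (hb : EqOn b b' (Icc 0 T)) : IsAmplitudeSol a' b' T μ U V :=
  ⟨fun x hx => ha hx ▸ h.hasDerivAt_slow x hx, fun x hx => hb hx ▸ h.hasDerivAt_fast x hx⟩

theorem exists_isAmplitudeSol (hT : 0 ≤ T) (ha : ContinuousOn a (Icc 0 T)) (hb : AbsContOn b T) :
    ∃ C, 1 ≤ C ∧ ∀ μ : ℂ, C ≤ ‖μ‖ → ∃ U V, IsAmplitudeSol a b T μ U V ∧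
      ∀ x ∈ Icc 0 T, ‖U x - 1‖ ≤ C / ‖μ‖ ∧ ‖V x‖ ≤ C / ‖μ‖ := by
  let ext (f : ℝ → ℂ) : ℝ → ℂ := IccExtend hT (domRestrict (Icc 0 T) f)
  have ext_eqOn (f : ℝ → ℂ) : EqOn (ext f) f (Icc 0 T) := fun x hx => IccExtend_of_mem hT _ hx
  obtain ⟨C, hC, hsol⟩ := exists_isAmplitudeSol_of_continuous hT ha.domRestrict.Icc_extend'
    hb.continuousOn.domRestrict.Icc_extend' (hb.congr (ext_eqOn b).symm)
  refine ⟨C, hC, fun μ hμ => ?_⟩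
  obtain ⟨U, V, hUV, hbound⟩ := hsol μ hμ
  exact ⟨U, V, hUV.congr (ext_eqOn a) (ext_eqOn b), hbound⟩

end Amplitude

section Dirac

variable {p q : ℝ → ℂ} {T : ℝ} {lam : ℂ}

theorem isDiracSol_of_hasDerivAt (hp : ContinuousOn p (Icc 0 T)) (hq : ContinuousOn q (Icc 0 T))
    {y₁ y₂ : ℝ → ℂ}
    (h₁ : ∀ x ∈ Icc 0 T, HasDerivAt y₁ (q x * y₁ x - (p x + lam) * y₂ x) x)
    (h₂ : ∀ x ∈ Icc 0 T, HasDerivAt y₂ ((lam - p x) * y₁ x - q x * y₂ x) x) :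
    IsDiracSol p q T lam fun x => (y₁ x, y₂ x) := by
  have hy₁ : ContinuousOn y₁ (Icc 0 T) := HasDerivAt.continuousOn h₁
  have hy₂ : ContinuousOn y₂ (Icc 0 T) := HasDerivAt.continuousOn h₂
  refine ⟨hy₁.prodMk hy₂, fun x hx => ?_⟩
  have hsub : uIcc 0 x ⊆ Icc 0 T := by
    rw [uIcc_of_le hx.1]
    exact Icc_subset_Icc_right hx.2
  constructor
  · rw [intervalIntegral.integral_eq_sub_of_hasDerivAt (fun t ht => h₁ t (hsub ht))
      (ContinuousOn.intervalIntegrable (ContinuousOn.mono (by fun_prop) hsub)), add_sub_cancel]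
  · rw [intervalIntegral.integral_eq_sub_of_hasDerivAt (fun t ht => h₂ t (hsub ht))
      (ContinuousOn.intervalIntegrable (ContinuousOn.mono (by fun_prop) hsub)), add_sub_cancel]

theorem IsAmplitudeSol.isDiracSol {U V : ℝ → ℂ}
    (h : IsAmplitudeSol (fun x => q x + -Complex.I * p x) (fun x => q x + Complex.I * p x) T
      (-(2 * Complex.I * lam)) U V)
    (hp : ContinuousOn p (Icc 0 T)) (hq : ContinuousOn q (Icc 0 T)) :
    IsDiracSol p q T lam fun x => (Complex.exp (Complex.I * lam * x) * (U x + V x),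
      Complex.exp (Complex.I * lam * x) * (-Complex.I * (U x - V x))) := by
  have hexp (x : ℝ) : HasDerivAt (fun x : ℝ => Complex.exp (Complex.I * lam * x))
      (Complex.exp (Complex.I * lam * x) * (Complex.I * lam)) x := by
    simpa using ((hasDerivAt_id (x : ℂ)).const_mul (Complex.I * lam)).cexp.comp_ofReal
  refine isDiracSol_of_hasDerivAt hp hq (fun x hx => ?_) (fun x hx => ?_)
  · refine ((hexp x).mul ((h.hasDerivAt_slow x hx).add (h.hasDerivAt_fast x hx))).congr_deriv ?_
    simp only [Pi.add_apply]
    ring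
  · refine ((hexp x).mul (((h.hasDerivAt_slow x hx).sub
      (h.hasDerivAt_fast x hx)).const_mul (-Complex.I))).congr_deriv ?_
    simp only [Pi.sub_apply]
    linear_combination (Complex.exp (Complex.I * lam * x) *
      (p x * (U x + V x) - lam * (U x + V x))) * Complex.I_sq

theorem exists_isDiracSol_norm_exp_neg_smul_sub_le (hT : 0 ≤ T) (hp : AbsContOn p T)
    (hq : AbsContOn q T) :
    ∃ C, 1 ≤ C ∧ ∀ lam : ℂ, C ≤ ‖lam‖ → ∃ Y, IsDiracSol p q T lam Y ∧ ∀ x ∈ Icc 0 T,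
      ‖Complex.exp (-(Complex.I * lam * x)) • Y x - (1, -Complex.I)‖ ≤ C / ‖lam‖ := by
  obtain ⟨C, hC, hsol⟩ := exists_isAmplitudeSol hT (hq.add (hp.const_mul (-Complex.I))).continuousOn
    (hq.add (hp.const_mul Complex.I))
  refine ⟨C, hC, fun lam hlam => ?_⟩
  have hμ : ‖-(2 * Complex.I * lam)‖ = 2 * ‖lam‖ := by simp
  obtain ⟨U, V, hUV, hbound⟩ := hsol (-(2 * Complex.I * lam)) (by rw [hμ]; linarith)
  refine ⟨_, hUV.isDiracSol hp.continuousOn hq.continuousOn, fun x hx => ?_⟩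
  obtain ⟨hU, hV⟩ := hbound x hx
  have hcancel (z : ℂ) :
      Complex.exp (-(Complex.I * lam * x)) * (Complex.exp (Complex.I * lam * x) * z) = z := by
    rw [← mul_assoc, ← Complex.exp_add, neg_add_cancel, Complex.exp_zero, one_mul]
  have hsum : ‖U x - 1‖ + ‖V x‖ ≤ C / ‖lam‖ := by
    calc ‖U x - 1‖ + ‖V x‖ ≤ C / (2 * ‖lam‖) + C / (2 * ‖lam‖) := by rw [← hμ]; gcongr
      _ = C / ‖lam‖ := by ring
  have hfst : U x + V x - 1 = (U x - 1) + V x := by ring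
  have hsnd : -Complex.I * (U x - V x) - -Complex.I = -Complex.I * ((U x - 1) - V x) := by ring
  rw [Prod.smul_mk, smul_eq_mul, smul_eq_mul, hcancel, hcancel, Prod.mk_sub_mk, Prod.norm_mk,
    hfst, hsnd, norm_mul, norm_neg, Complex.norm_I, one_mul]
  exact (max_le (norm_add_le _ _) (norm_sub_le _ _)).trans hsum

/-- The reflection `(y₁, y₂) ↦ (y₁, -y₂)`, which conjugates the Dirac system with data
`(p, q, λ)` to the one with data `(-p, q, -λ)`. -/
def diracReflection (y : ℂ × ℂ) : ℂ × ℂ := (y.1, -y.2)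

theorem norm_smul_diracReflection_sub_diracReflection (k : ℂ) (y z : ℂ × ℂ) :
    ‖k • diracReflection y - diracReflection z‖ = ‖k • y - z‖ := by
  have hsnd : k • -y.2 - -z.2 = -(k • y.2 - z.2) := by rw [smul_neg]; abel
  simp only [diracReflection, Prod.norm_def, Prod.fst_sub, Prod.snd_sub, Prod.smul_fst,
    Prod.smul_snd, hsnd, norm_neg]

theorem IsDiracSol.reflection {y : ℝ → ℂ × ℂ} (h : IsDiracSol (fun x => -p x) q T (-lam) y) :
    IsDiracSol p q T lam fun x => diracReflection (y x) := by
  obtain ⟨hcont, hint⟩ := h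
  refine ⟨hcont.fst.prodMk hcont.snd.neg, fun x hx => ?_⟩
  obtain ⟨h₁, h₂⟩ := hint x hx
  simp only [diracReflection]
  refine ⟨h₁.trans ?_, (congrArg Neg.neg h₂).trans ?_⟩
  · congr 2
    ext t
    ring
  · rw [neg_add, ← intervalIntegral.integral_neg]
    congr 2
    ext t
    ring

theorem exists_isDiracSol_norm_exp_smul_sub_le (hT : 0 ≤ T) (hp : AbsContOn p T)
    (hq : AbsContOn q T) :
    ∃ C, 1 ≤ C ∧ ∀ lam : ℂ, C ≤ ‖lam‖ → ∃ Y, IsDiracSol p q T lam Y ∧ ∀ x ∈ Icc 0 T,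
      ‖Complex.exp (Complex.I * lam * x) • Y x - (1, Complex.I)‖ ≤ C / ‖lam‖ := by
  obtain ⟨C, hC, hsol⟩ := exists_isDiracSol_norm_exp_neg_smul_sub_le hT hp.neg hq
  refine ⟨C, hC, fun lam hlam => ?_⟩
  obtain ⟨Z, hZ, hbound⟩ := hsol (-lam) (norm_neg lam ▸ hlam)
  refine ⟨fun x => diracReflection (Z x), hZ.reflection, fun x hx => ?_⟩
  have hexp : Complex.exp (Complex.I * lam * x) = Complex.exp (-(Complex.I * -lam * x)) := by
    congr 1
    ring
  have hlimit : ((1 : ℂ), Complex.I) = diracReflection (1, -Complex.I) := by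
    rw [diracReflection, neg_neg]
  rw [hexp, hlimit, norm_smul_diracReflection_sub_diracReflection, ← norm_neg lam]
  exact hbound x hx

/-- The Wronskian of two vector-valued solutions at a point, as a bilinear form on `ℂ²`. -/
def wronskian (y z : ℂ × ℂ) : ℂ := y.1 * z.2 - y.2 * z.1

theorem wronskian_smul_smul (k l : ℂ) (y z : ℂ × ℂ) :
    wronskian (k • y) (l • z) = k * l * wronskian y z := by
  simp only [wronskian, Prod.smul_fst, Prod.smul_snd, smul_eq_mul]
  ring

theorem norm_wronskian_le (y z : ℂ × ℂ) : ‖wronskian y z‖ ≤ 2 * (‖y‖ * ‖z‖) :=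
  calc ‖wronskian y z‖ ≤ ‖y.1‖ * ‖z.2‖ + ‖y.2‖ * ‖z.1‖ := by
        rw [← norm_mul, ← norm_mul]; exact norm_sub_le _ _
    _ ≤ ‖y‖ * ‖z‖ + ‖y‖ * ‖z‖ := by
        gcongr <;> first | exact norm_fst_le _ | exact norm_snd_le _
    _ = 2 * (‖y‖ * ‖z‖) := by ring

theorem norm_wronskian_sub_wronskian_le (y z y₀ z₀ : ℂ × ℂ) :
    ‖wronskian y z - wronskian y₀ z₀‖ ≤
      2 * (‖y - y₀‖ * ‖z₀‖ + ‖y₀‖ * ‖z - z₀‖ + ‖y - y₀‖ * ‖z - z₀‖) := by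
  have expand : wronskian y z - wronskian y₀ z₀ =
      wronskian (y - y₀) z₀ + wronskian y₀ (z - z₀) + wronskian (y - y₀) (z - z₀) := by
    simp only [wronskian, Prod.fst_sub, Prod.snd_sub]
    ring
  rw [expand]
  refine norm_add₃_le.trans ?_
  linarith [norm_wronskian_le (y - y₀) z₀, norm_wronskian_le y₀ (z - z₀),
    norm_wronskian_le (y - y₀) (z - z₀)]

theorem norm_wronskian_sub_two_mul_I_le {k l : ℂ} (hkl : k * l = 1) {ε : ℝ} (hε : ε ≤ 1)
    {y z : ℂ × ℂ} (hy : ‖k • y - (1, -Complex.I)‖ ≤ ε) (hz : ‖l • z - (1, Complex.I)‖ ≤ ε) :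
    ‖wronskian y z - 2 * Complex.I‖ ≤ 6 * ε := by
  have hlimit : wronskian (1, -Complex.I) (1, Complex.I) = 2 * Complex.I := by
    simp only [wronskian]
    ring
  have hε₀ : 0 ≤ ε := (norm_nonneg _).trans hy
  have hnorm : ‖((1 : ℂ), -Complex.I)‖ = 1 ∧ ‖((1 : ℂ), Complex.I)‖ = 1 := by
    simp [Prod.norm_mk]
  calc ‖wronskian y z - 2 * Complex.I‖
      = ‖wronskian (k • y) (l • z) - wronskian (1, -Complex.I) (1, Complex.I)‖ := by
        rw [wronskian_smul_smul, hkl, one_mul, hlimit]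
    _ ≤ 2 * (ε * 1 + 1 * ε + ε * ε) := by
        refine (norm_wronskian_sub_wronskian_le _ _ _ _).trans ?_
        rw [hnorm.1, hnorm.2]
        gcongr
    _ ≤ 6 * ε := by nlinarith

end Dirac

/-- **Existence of a Birkhoff-type fundamental system**: there are `C > 0` and `R ≥ 1` such
that for every `λ` with `|λ| ≥ R` (in particular in each closed half-plane `± Im λ ≥ 0`)
there exist solutions `Y₁(·,λ), Y₂(·,λ)` of the Dirac system with
`‖e^{-iλx} Y₁(x,λ) - (1,-i)ᵀ‖ ≤ C/|λ|`, `‖e^{iλx} Y₂(x,λ) - (1,i)ᵀ‖ ≤ C/|λ|`, and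
`|Y₁,₁ Y₂,₂ - Y₁,₂ Y₂,₁ - 2i| ≤ C/|λ|` on `[0,T]`. -/
theorem statement4
    (T : ℝ) (hT : 0 < T)
    (p q : ℝ → ℂ) (hp : AbsContOn p T) (hq : AbsContOn q T) :
    ∃ C > (0 : ℝ), ∃ R : ℝ, 1 ≤ R ∧ ∀ lam : ℂ, R ≤ ‖lam‖ →
      ∃ Y₁ Y₂ : ℝ → ℂ × ℂ,
        IsDiracSol p q T lam Y₁ ∧ IsDiracSol p q T lam Y₂ ∧
        ∀ x ∈ Icc (0 : ℝ) T,
          ‖Complex.exp (-(Complex.I * lam * (x : ℂ))) • Y₁ x - ((1 : ℂ), -Complex.I)‖ ≤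
            C / ‖lam‖ ∧
          ‖Complex.exp (Complex.I * lam * (x : ℂ)) • Y₂ x - ((1 : ℂ), Complex.I)‖ ≤
            C / ‖lam‖ ∧
          ‖(Y₁ x).1 * (Y₂ x).2 - (Y₁ x).2 * (Y₂ x).1 - 2 * Complex.I‖ ≤ C / ‖lam‖ := by
  obtain ⟨C₁, hC₁, hsol₁⟩ := exists_isDiracSol_norm_exp_neg_smul_sub_le hT.le hp hq
  obtain ⟨C₂, -, hsol₂⟩ := exists_isDiracSol_norm_exp_smul_sub_le hT.le hp hq
  have hC : 1 ≤ max C₁ C₂ := le_max_of_le_left hC₁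
  refine ⟨6 * max C₁ C₂, by positivity, max C₁ C₂, hC, fun lam hlam => ?_⟩
  obtain ⟨Y₁, hY₁, hbound₁⟩ := hsol₁ lam ((le_max_left _ _).trans hlam)
  obtain ⟨Y₂, hY₂, hbound₂⟩ := hsol₂ lam ((le_max_right _ _).trans hlam)
  refine ⟨Y₁, Y₂, hY₁, hY₂, fun x hx => ?_⟩
  have hε₀ : 0 ≤ max C₁ C₂ / ‖lam‖ := by positivity
  have hε₁ : max C₁ C₂ / ‖lam‖ ≤ 1 := div_le_one_of_le₀ hlam (norm_nonneg _)
  have h₁ := (hbound₁ x hx).trans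
    (div_le_div_of_nonneg_right (le_max_left C₁ C₂) (norm_nonneg lam))
  have h₂ := (hbound₂ x hx).trans
    (div_le_div_of_nonneg_right (le_max_right C₁ C₂) (norm_nonneg lam))
  have hexp : Complex.exp (-(Complex.I * lam * x)) * Complex.exp (Complex.I * lam * x) = 1 := by
    rw [← Complex.exp_add, neg_add_cancel, Complex.exp_zero]
  rw [mul_div_assoc]
  exact ⟨by linarith, by linarith, norm_wronskian_sub_two_mul_I_le hexp hε₁ h₁ h₂⟩
end
end
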